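/- arXiv:2507.23766 — 2 statements merged into one kernel-verified Lean document; each statement's English description precedes it below -/
import Mathlib

section
/- Let T be the 2-torus and J a 1-complex (embedded finite graph) on T. Let u, v be a basis of H₁(T; ℤ). If the complement T − J contains no closed curve representing the class v, then J contains a closed curve representing a class au + bv with a ≠ 0. -/
/-!
STATEMENT 8: Let `T` be the 2-torus and `J` a 1-complex (embedded finite graph)
on `T`.  Let `u, v` be a basis of `H₁(T; ℤ)`.  If the complement `T − J`
contains no closed curve representing the class `v`, then `J` contains a closed
curve representing a class `au + bv` with `a ≠ 0`.

Model: the torus is `𝕋 = (ℝ/ℤ) × (ℝ/ℤ)`; since `π₁(𝕋)` is abelian, `H₁(𝕋; ℤ)`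
is canonically `π₁(𝕋, x)`, written multiplicatively, and "a basis `u, v`" means
every element is uniquely `u^a * v^b`.  A subset contains a representative of a
class `w` if it contains a closed curve whose class in `π₁(𝕋, x)` — after
conjugating back to the basepoint along some path, which is immaterial since
the group is abelian — is `w`.  A 1-complex on `𝕋` is a finite union of
embedded arcs. -/

open scoped Topology

/-- The 2-torus `(ℝ/ℤ) × (ℝ/ℤ)`. -/
abbrev Torus2 : Type := AddCircle (1 : ℝ) × AddCircle (1 : ℝ)

/-- `RepresentsIn x w S` : the subset `S` of the torus contains a closed curve
representing the homology class `w ∈ H₁(𝕋) = π₁(𝕋, x)`: there is a loop `ℓ`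
with image in `S` which, joined to the basepoint `x` by a path `p`, gives the
class `w`. -/
def RepresentsIn (x : TopCat.of Torus2)
    (w : FundamentalGroup (TopCat.of Torus2) x) (S : Set Torus2) : Prop :=
  ∃ (y : Torus2) (ℓ : Path y y) (p : Path x y),
    Set.range ℓ ⊆ S ∧
    FundamentalGroup.fromPath ⟦(p.trans ℓ).trans p.symm⟧ = w

/-- `IsOneComplex J` : `J` is a finite 1-complex (embedded finite graph) on the
torus, i.e. a finite union of embedded arcs. -/
def IsOneComplex (J : Set Torus2) : Prop :=
  ∃ (n : ℕ) (a b : Fin n → Torus2) (γ : ∀ i, Path (a i) (b i)),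
    (∀ i, Function.Injective (γ i)) ∧ J = ⋃ i, Set.range (γ i)

/-! Lift to the universal covering `ℝ² → 𝕋` in the coordinates given by `u, v`, and suppose that
every loop in `J` has class `au + bv` with `a = 0`. Then on `J` the first coordinate
`c₁ : 𝕋 → ℝ/ℤ` lifts to a real function, which Tietze extends to `H₁ : 𝕋 → ℝ`. The open set
`O = {H₁ ≠ c₁}` misses `J`, and its loops have `a = 0` because `x - H₁` avoids `ℤ` over `O`.
If one of them had `b ≠ 0`, then by the universal chord theorem the preimage of `O` would contain a
path from some `q` to `q + (0, 1)`, i.e. a representative of `v` avoiding `J`. Otherwise `c₂` also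
lifts on `O`, to a real function that agrees on the closed set `{H₁ + 1/2 = c₁} ⊆ O` with some
`H₂ : 𝕋 → ℝ`. A fixed point in `ℝ²` of the bounded map `(H₁ + 1/2, H₂ + 1/2)` lies over this set,
where `c₂ = H₂` contradicts `c₂ = H₂ + 1/2`. -/

open Set

theorem sub_eq_log_sub_log_of_mul_exp_mem_slitPlane {X : Type*} [TopologicalSpace X] {s : Set X}
    (hs : IsPreconnected s) {G : X → ℂ} (hG : ContinuousOn G s) {c : ℂ}
    (hc : ∀ x ∈ s, c * Complex.exp (G x) ∈ Complex.slitPlane) {x y : X} (hx : x ∈ s) (hy : y ∈ s) :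
    G x - G y = Complex.log (c * Complex.exp (G x)) - Complex.log (c * Complex.exp (G y)) := by
  have hexp : ∀ z ∈ s, Complex.exp (G z - Complex.log (c * Complex.exp (G z))) = c⁻¹ := by
    intro z hz
    have hne := Complex.slitPlane_ne_zero (hc z hz)
    rw [Complex.exp_sub, Complex.exp_log hne]
    field_simp [left_ne_zero_of_mul hne]
  have hconst : G x - Complex.log (c * Complex.exp (G x)) =
      G y - Complex.log (c * Complex.exp (G y)) :=
    Complex.isCoveringMap_exp.constOn_of_comp hs
      (hG.sub ((continuousOn_const.mul (Complex.continuous_exp.comp_continuousOn hG)).clog hc))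
      (fun z hz z' hz' ↦ Subtype.ext ((hexp z hz).trans (hexp z' hz').symm)) hx hy
  linear_combination hconst

theorem log_neg_I_mul {z : ℂ} (hz : z ≠ 0) (him : 0 ≤ z.im) :
    Complex.log (-Complex.I * z) = Complex.log z - Real.pi / 2 * Complex.I := by
  rw [mul_comm, (Complex.log_mul_eq_add_log_iff hz (neg_ne_zero.2 Complex.I_ne_zero)).2,
    Complex.log_neg_I]
  · ring
  · rw [Complex.arg_neg_I]
    have := Complex.arg_nonneg_iff.2 him
    constructor <;> linarith [Complex.arg_le_pi z, Real.pi_pos]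

theorem mem_slitPlane_of_re_nonneg {z : ℂ} (hz : z ≠ 0) (hre : 0 ≤ z.re) :
    z ∈ Complex.slitPlane := by
  by_contra h
  rw [Complex.mem_slitPlane_iff, not_or, not_lt, not_not] at h
  exact hz (Complex.ext (le_antisymm h.1 hre) h.2)

theorem sub_eq_log_sub_log_add_of_quarter_turn {X : Type*} [TopologicalSpace X] {s : Set X}
    (hs : IsPreconnected s) {G : X → ℂ} (hG : ContinuousOn G s) {c : ℂ} (hc : c ≠ 0)
    (hre : ∀ x ∈ s, 0 ≤ (c * Complex.exp (G x)).re) {x y : X} (hx : x ∈ s) (hy : y ∈ s)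
    (him : 0 ≤ (c * Complex.exp (G x)).im) :
    G x - G y = Complex.log (-Complex.I * c * Complex.exp (G x)) -
      Complex.log (c * Complex.exp (G y)) + Real.pi / 2 * Complex.I := by
  have hne : ∀ z, c * Complex.exp (G z) ≠ 0 := fun z ↦ mul_ne_zero hc (Complex.exp_ne_zero _)
  rw [mul_assoc, log_neg_I_mul (hne x) him, sub_eq_log_sub_log_of_mul_exp_mem_slitPlane hs hG
    (fun z hz ↦ mem_slitPlane_of_re_nonneg (hne z) (hre z hz)) hx hy]
  ring

-- The four quarter turns would add up to a change of `2πi` in `G` around the boundary.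
theorem not_exp_winds_around_rectangle {a b c d : ℝ} (hab : a ≤ b) (hcd : c ≤ d) {G : ℝ × ℝ → ℂ}
    (hG : Continuous G)
    (hleft : ∀ y ∈ Icc c d, (Complex.exp (G (a, y))).re ≤ 0)
    (hright : ∀ y ∈ Icc c d, 0 ≤ (Complex.exp (G (b, y))).re)
    (hbot : ∀ x ∈ Icc a b, (Complex.exp (G (x, c))).im ≤ 0)
    (htop : ∀ x ∈ Icc a b, 0 ≤ (Complex.exp (G (x, d))).im) : False := by
  have ha := left_mem_Icc.2 hab
  have hb := right_mem_Icc.2 hab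
  have hc := left_mem_Icc.2 hcd
  have hd := right_mem_Icc.2 hcd
  have right := sub_eq_log_sub_log_add_of_quarter_turn (G := fun y ↦ G (b, y)) isPreconnected_Icc
    (by fun_prop) one_ne_zero (by simpa using hright) hd hc (by simpa using htop b hb)
  have top := sub_eq_log_sub_log_add_of_quarter_turn (G := fun x ↦ G (x, d)) isPreconnected_Icc
    (by fun_prop) (neg_ne_zero.2 Complex.I_ne_zero) (by simpa using htop) ha hb
    (by simpa using hleft d hd)
  have left := sub_eq_log_sub_log_add_of_quarter_turn (G := fun y ↦ G (a, y)) isPreconnected_Icc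
    (by fun_prop) (neg_ne_zero.2 one_ne_zero) (by simpa using hleft) hc hd
    (by simpa using hbot a ha)
  have bottom := sub_eq_log_sub_log_add_of_quarter_turn (G := fun x ↦ G (x, c)) isPreconnected_Icc
    (by fun_prop) Complex.I_ne_zero (by simpa using hbot) hb ha (by simpa using hright c hc)
  simp only [neg_mul, mul_neg, neg_neg, one_mul, mul_one, Complex.I_mul_I]
    at right top left bottom
  have hturn : 2 * Real.pi * Complex.I = 0 := by
    linear_combination -(right + top + left + bottom)
  simp [Real.pi_ne_zero] at hturn

theorem exists_eq_zero_of_sign_change_on_sides {a b c d : ℝ} (hab : a ≤ b) (hcd : c ≤ d)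
    {f g : ℝ × ℝ → ℝ} (hf : ContinuousOn f (Icc a b ×ˢ Icc c d))
    (hg : ContinuousOn g (Icc a b ×ˢ Icc c d))
    (hleft : ∀ y ∈ Icc c d, f (a, y) ≤ 0) (hright : ∀ y ∈ Icc c d, 0 ≤ f (b, y))
    (hbot : ∀ x ∈ Icc a b, g (x, c) ≤ 0) (htop : ∀ x ∈ Icc a b, 0 ≤ g (x, d)) :
    ∃ p ∈ Icc a b ×ˢ Icc c d, f p = 0 ∧ g p = 0 := by
  by_contra! hzero
  let clamp : ℝ × ℝ → ℝ × ℝ := fun p ↦ (projIcc a b hab p.1, projIcc c d hcd p.2)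
  have hmem : ∀ p, clamp p ∈ Icc a b ×ˢ Icc c d := fun p ↦
    ⟨(projIcc a b hab p.1).2, (projIcc c d hcd p.2).2⟩
  have hclamp : Continuous clamp := by fun_prop
  have hfix : ∀ x ∈ Icc a b, ∀ y ∈ Icc c d, clamp (x, y) = (x, y) := fun x hx y hy ↦ by
    simp only [clamp, projIcc_of_mem hab hx, projIcc_of_mem hcd hy]
  let F : C(ℝ × ℝ, ℂ) := ⟨fun p ↦ ⟨f (clamp p), g (clamp p)⟩,
    Complex.equivRealProdCLM.symm.continuous.comp <|
      (hf.comp_continuous hclamp hmem).prodMk (hg.comp_continuous hclamp hmem)⟩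
  have hF : ∀ p, F p ≠ 0 := fun p hp ↦
    hzero _ (hmem p) (congrArg Complex.re hp) (congrArg Complex.im hp)
  obtain ⟨G, ⟨-, hGF⟩, -⟩ := Complex.isCoveringMapOn_exp.existsUnique_continuousMap_lifts F
    (Complex.exp_log (hF 0)) hF
  have hexp : ∀ x ∈ Icc a b, ∀ y ∈ Icc c d, Complex.exp (G (x, y)) = ⟨f (x, y), g (x, y)⟩ :=
    fun x hx y hy ↦ (congrFun hGF (x, y)).trans <|
      congrArg (fun p ↦ (⟨f p, g p⟩ : ℂ)) (hfix x hx y hy)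
  have ha := left_mem_Icc.2 hab
  have hb := right_mem_Icc.2 hab
  have hc := left_mem_Icc.2 hcd
  have hd := right_mem_Icc.2 hcd
  refine not_exp_winds_around_rectangle hab hcd G.continuous (fun y hy ↦ ?_) (fun y hy ↦ ?_)
    (fun x hx ↦ ?_) (fun x hx ↦ ?_)
  · simpa only [hexp a ha y hy] using hleft y hy
  · simpa only [hexp b hb y hy] using hright y hy
  · simpa only [hexp x hx c hc] using hbot x hx
  · simpa only [hexp x hx d hd] using htop x hx

theorem exists_fixedPoint_of_isBounded_range {Φ : ℝ × ℝ → ℝ × ℝ} (hΦ : Continuous Φ)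
    (hb : Bornology.IsBounded (range Φ)) : ∃ p, Function.IsFixedPt Φ p := by
  obtain ⟨R, hR⟩ := hb.exists_norm_le
  have habs : ∀ p, |(Φ p).1| ≤ R ∧ |(Φ p).2| ≤ R := fun p ↦ by
    simpa [Prod.norm_def] using hR _ (mem_range_self p)
  have hR0 : -R ≤ R := by linarith [(abs_nonneg _).trans (habs 0).1]
  obtain ⟨p, -, hp⟩ := exists_eq_zero_of_sign_change_on_sides hR0 hR0
    (f := fun p ↦ p.1 - (Φ p).1) (g := fun p ↦ p.2 - (Φ p).2) (by fun_prop) (by fun_prop)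
    (fun y _ ↦ by linarith [neg_le_of_abs_le (habs (-R, y)).1])
    (fun y _ ↦ by linarith [le_of_abs_le (habs (R, y)).1])
    (fun x _ ↦ by linarith [neg_le_of_abs_le (habs (x, -R)).2])
    (fun x _ ↦ by linarith [le_of_abs_le (habs (x, R)).2])
  exact ⟨p, Prod.ext (sub_eq_zero.1 hp.1).symm (sub_eq_zero.1 hp.2).symm⟩

-- The rectangle for `(s, t)` has `s` between a minimum and a maximum of `x`, and `t` so far away at
-- either end that the drift `t * d` outweighs the oscillation of `z`.
theorem exists_chord_of_periodic {x z : ℝ → ℝ} (hx : Continuous x) (hz : Continuous z)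
    (hxp : Function.Periodic x 1) (hzp : Function.Periodic z 1) {d : ℝ} (hd : d ≠ 0) (h : ℝ) :
    ∃ s t, x s = x t ∧ z s + s * d = z t + t * d + h := by
  wlog hd' : 0 < d generalizing x z d
  · obtain ⟨s, t, hxst, hzst⟩ := this (hx.comp continuous_neg) (hz.comp continuous_neg)
      (fun s ↦ by simpa [sub_eq_add_neg, add_comm] using hxp.sub_eq (-s))
      (fun s ↦ by simpa [sub_eq_add_neg, add_comm] using hzp.sub_eq (-s)) (neg_ne_zero.2 hd)
      (neg_pos.2 (hd.lt_of_le (not_lt.1 hd')))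
    exact ⟨-s, -t, hxst, by simpa using hzst⟩
  obtain ⟨-, ⟨a, rfl⟩, hmin⟩ := (hxp.compact_of_continuous one_ne_zero hx).exists_isLeast
    (range_nonempty x)
  obtain ⟨-, ⟨b₀, rfl⟩, hmax⟩ := (hxp.compact_of_continuous one_ne_zero hx).exists_isGreatest
    (range_nonempty x)
  obtain ⟨b, hb, hxb⟩ := hxp.exists_mem_Ico one_pos b₀ a
  rw [hxb] at hmax
  obtain ⟨C, hC⟩ := (hzp.compact_of_continuous one_ne_zero hz).isBounded.exists_norm_le
  have hC : ∀ s, -C ≤ z s ∧ z s ≤ C := fun s ↦ abs_le.1 (hC _ (mem_range_self s))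
  have hab : a ≤ b := hb.1
  obtain ⟨M, hM⟩ : ∃ M, M * d = 2 * C + |h| := ⟨_, div_mul_cancel₀ _ hd⟩
  have hM0 : 0 ≤ M := nonneg_of_mul_nonneg_left
    (hM ▸ by linarith [abs_nonneg h, (hC 0).1, (hC 0).2]) hd'
  obtain ⟨⟨s, t⟩, -, hxst, hzst⟩ := exists_eq_zero_of_sign_change_on_sides hab
    (show a - M ≤ b + M by linarith) (f := fun p ↦ x p.1 - x p.2)
    (g := fun p ↦ z p.2 + p.2 * d + h - (z p.1 + p.1 * d)) (by fun_prop) (by fun_prop)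
    (fun t _ ↦ sub_nonpos.2 (hmin (mem_range_self t)))
    (fun t _ ↦ sub_nonneg.2 (hmax (mem_range_self t)))
    (fun s hs ↦ by nlinarith [hs.1, hC s, hC (a - M), le_abs_self h])
    (fun s hs ↦ by nlinarith [hs.2, hC s, hC (b + M), neg_abs_le h])
  exact ⟨s, t, sub_eq_zero.1 hxst, (sub_eq_zero.1 hzst).symm⟩

theorem exists_periodic_of_joinedIn_add {E : Type*} [AddCommGroup E] [Module ℝ E]
    [TopologicalSpace E] [IsTopologicalAddGroup E] [ContinuousSMul ℝ E] {U : Set E} {p v : E}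
    (hU : ∀ q, q + v ∈ U ↔ q ∈ U) (h : JoinedIn U p (p + v)) :
    ∃ φ : ℝ → E, Continuous φ ∧ Function.Periodic φ 1 ∧ ∀ s, φ s + s • v ∈ U := by
  obtain ⟨γ, hγ⟩ := h
  let ψ : ℝ → E := fun t ↦ γ.extend t - t • v
  have hψ : Continuous (ψ ∘ Int.fract) :=
    ContinuousOn.comp_fract'' (by fun_prop) (by simp [ψ])
  refine ⟨ψ ∘ Int.fract, hψ, fun s ↦ by simp, fun s ↦ ?_⟩
  have hzsmul : ∀ (n : ℤ) q, q + n • v ∈ U ↔ q ∈ U := fun n q ↦ by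
    induction n with
    | zero => simp
    | succ n ih => rw [add_smul, one_smul, ← add_assoc, hU, ih]
    | pred n ih => rw [← hU, sub_smul, one_smul, add_assoc, sub_add_cancel, ih]
  have hsplit : (ψ ∘ Int.fract) s + s • v = γ.extend (Int.fract s) + ⌊s⌋ • v := by
    rw [← Int.cast_smul_eq_zsmul ℝ ⌊s⌋ v, ← Int.self_sub_fract s]
    simp only [ψ, Function.comp_apply, sub_smul]
    abel
  rw [hsplit, hzsmul, γ.extend_apply ⟨Int.fract_nonneg s, (Int.fract_lt_one s).le⟩]
  exact hγ _

theorem exists_joinedIn_add_vertical {U : Set (ℝ × ℝ)} {p : ℝ × ℝ} {d : ℝ} (hd : d ≠ 0)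
    (hU : ∀ q, q + (0, d) ∈ U ↔ q ∈ U) (hp : JoinedIn U p (p + (0, d))) (h : ℝ) :
    ∃ q, JoinedIn U q (q + (0, h)) := by
  obtain ⟨φ, hφ, hper, hmem⟩ := exists_periodic_of_joinedIn_add hU hp
  obtain ⟨s, t, hfst, hsnd⟩ := exists_chord_of_periodic (continuous_fst.comp hφ)
    (continuous_snd.comp hφ) (hper.comp Prod.fst) (hper.comp Prod.snd) hd h
  let Γ : ℝ → ℝ × ℝ := fun s ↦ φ s + s • (0, d)
  have hchord : Γ s = Γ t + (0, h) := by
    ext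
    · simpa [Γ] using hfst
    · simpa [Γ] using hsnd
  refine ⟨Γ t, hchord ▸ ?_⟩
  exact ((isPathConnected_range (by fun_prop : Continuous Γ)).joinedIn _ (mem_range_self t) _
    (mem_range_self s)).mono (range_subset_iff.2 hmem)

section Lifting

variable {A E X : Type*} [TopologicalSpace A] [TopologicalSpace E] [TopologicalSpace X]
  {p : E → X} {f : A → X}

-- A path in `{z | p z.2 = f z.1}` from `(a, e)` to `(a, e')` is a loop at `a` with a lift of its
-- image under `f`, so `huniq` says that the lifts of all such images are closed.
theorem exists_continuous_lift_of_pathConnectedSpace [PathConnectedSpace A]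
    [LocallyPathConnectedSpace A] (cov : IsCoveringMap p) (hp : Function.Surjective p)
    (hf : Continuous f)
    (huniq : ∀ a e e', JoinedIn {z : A × E | p z.2 = f z.1} (a, e) (a, e') → e = e') :
    ∃ F : A → E, Continuous F ∧ ∀ a, p (F a) = f a := by
  obtain ⟨a₀⟩ : Nonempty A := inferInstance
  obtain ⟨e₀, he₀⟩ := hp (f a₀)
  have hjoin : ∀ (γ : C(unitInterval, A)) (Γ : C(unitInterval, E)), γ 0 = a₀ → Γ 0 = e₀ →
      p ∘ Γ = f ∘ γ → JoinedIn {z : A × E | p z.2 = f z.1} (a₀, e₀) (γ 1, Γ 1) :=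
    fun γ Γ hγ hΓ h ↦ ⟨⟨γ.prodMk Γ, Prod.ext hγ hΓ, rfl⟩, congrFun h⟩
  obtain ⟨F, ⟨-, hF⟩, -⟩ := cov.isLocalHomeomorph.existsUnique_continuousMap_lifts ⟨f, hf⟩ a₀ e₀ he₀
    (fun γ hγ ↦ by
      obtain ⟨Γ, hΓ, hΓ₀⟩ := cov.exists_path_lifts (.comp ⟨f, hf⟩ γ) e₀ (by simp [hγ, he₀])
      exact ⟨Γ, hΓ₀, hΓ⟩)
    (fun γ γ' Γ Γ' hγ hγ' hΓ₀ hΓ₀' hΓ hΓ' hend ↦ huniq _ _ _ <|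
      (hend ▸ (hjoin γ Γ hγ hΓ₀ hΓ).symm).trans (hjoin γ' Γ' hγ' hΓ₀' hΓ'))
  exact ⟨F, F.continuous, congrFun hF⟩

theorem exists_continuous_lift [LocallyPathConnectedSpace A] (cov : IsCoveringMap p)
    (hp : Function.Surjective p) (hf : Continuous f)
    (huniq : ∀ a e e', JoinedIn {z : A × E | p z.2 = f z.1} (a, e) (a, e') → e = e') :
    ∃ F : A → E, Continuous F ∧ ∀ a, p (F a) = f a := by
  have hlift : ∀ C ∈ range (pathComponent (X := A)), ∃ F : C(C, E), ∀ a, p (F a) = f a := by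
    rintro - ⟨b, rfl⟩
    have := isPathConnected_iff_pathConnectedSpace.1 (isPathConnected_pathComponent (x := b))
    have := (IsOpen.pathComponent b).locallyPathConnectedSpace
    obtain ⟨F, hF, hpF⟩ := exists_continuous_lift_of_pathConnectedSpace cov hp
      (hf.comp continuous_subtype_val) (A := pathComponent b) fun a e e' ⟨γ, hγ⟩ ↦
        huniq a e e' ⟨γ.map (continuous_subtype_val.prodMap continuous_id), hγ⟩
    exact ⟨⟨F, hF⟩, hpF⟩
  choose F hF using hlift
  have hcompat : ∀ C hC D hD a (ha : a ∈ C) (ha' : a ∈ D), F C hC ⟨a, ha⟩ = F D hD ⟨a, ha'⟩ := by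
    intro C hC D hD a haC haD
    obtain rfl : C = D := by
      obtain ⟨⟨b, rfl⟩, ⟨c, rfl⟩⟩ := And.intro hC hD
      rw [← pathComponent_congr haC, ← pathComponent_congr haD]
    rfl
  have hcover : ∀ a, ∃ C ∈ range (pathComponent (X := A)), C ∈ 𝓝 a := fun a ↦
    ⟨_, mem_range_self a, (IsOpen.pathComponent a).mem_nhds (mem_pathComponent_self a)⟩
  refine ⟨ContinuousMap.liftCover' _ F hcompat hcover, map_continuous _, fun a ↦ ?_⟩
  rw [ContinuousMap.liftCover_coe' (hs := mem_range_self a) ⟨a, mem_pathComponent_self a⟩, hF]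

end Lifting

theorem exists_continuousMap_lift_on_isClosed.{t, e, x} {T : Type t} {E : Type e} {X : Type x}
    [TopologicalSpace T] [NormalSpace T] [TopologicalSpace E] [TietzeExtension.{t} E]
    [TopologicalSpace X] {p : E → X} {f : T → X}
    {S K : Set T} [LocallyPathConnectedSpace S] (hK : IsClosed K) (hKS : K ⊆ S)
    (cov : IsCoveringMap p) (hp : Function.Surjective p) (hf : ContinuousOn f S)
    (huniq : ∀ x e e',
      JoinedIn {z : T × E | z.1 ∈ S ∧ p z.2 = f z.1} (x, e) (x, e') → e = e') :
    ∃ H : C(T, E), ∀ x ∈ K, p (H x) = f x := by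
  obtain ⟨F, hF, hpF⟩ := exists_continuous_lift cov hp hf.domRestrict fun x e e' ⟨γ, hγ⟩ ↦
    huniq x e e' ⟨γ.map (continuous_subtype_val.prodMap continuous_id),
      fun t ↦ ⟨(γ t).1.2, hγ t⟩⟩
  obtain ⟨H, hH⟩ := ContinuousMap.exists_restrict_eq hK
    ⟨F ∘ inclusion hKS, hF.comp (continuous_inclusion hKS)⟩
  refine ⟨H, fun x hx ↦ ?_⟩
  rw [show H x = F ⟨x, hKS hx⟩ from DFunLike.congr_fun hH ⟨x, hx⟩, hpF, domRestrict_apply]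

theorem floor_eq_floor_of_ordConnected {s : Set ℝ} (hs : s.OrdConnected)
    (hint : ∀ n : ℤ, (n : ℝ) ∉ s) {x y : ℝ} (hx : x ∈ s) (hy : y ∈ s) : ⌊x⌋ = ⌊y⌋ := by
  wlog hxy : x ≤ y generalizing x y
  · exact (this hy hx (le_of_not_ge hxy)).symm
  refine (Int.floor_mono hxy).eq_of_not_lt fun hlt ↦ hint ⌊y⌋ (hs.out hx hy ⟨?_, Int.floor_le y⟩)
  exact (Int.floor_lt.1 hlt).le

theorem coe_add_half_ne (r : ℝ) : ((r + 1 / 2 : ℝ) : AddCircle (1 : ℝ)) ≠ r := by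
  rw [AddCircle.coe_add, Ne, add_eq_left, AddCircle.coe_eq_zero_iff]
  rintro ⟨n, hn⟩
  have hn : (2 * n : ℝ) = 1 := by linarith [zsmul_one (R := ℝ) n]
  norm_cast at hn
  lia

theorem locallyPathConnectedSpace_range {X Y : Type*} [TopologicalSpace X] [TopologicalSpace Y]
    [CompactSpace X] [LocallyPathConnectedSpace X] [T2Space Y] {f : X → Y} (hf : Continuous f) :
    LocallyPathConnectedSpace (range f) :=
  (hf.rangeFactorization.isClosedMap.isQuotientMap hf.rangeFactorization
    rangeFactorization_surjective).locallyPathConnectedSpace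

/-- The homomorphism `π : ℝ² → T` exhibits `T` as the torus `ℝ² / ℤ²`. -/
structure IsTorusCovering {T : Type*} [TopologicalSpace T] [AddGroup T] (π : ℝ × ℝ →+ T) :
    Prop where
  isQuotientMap : Topology.IsQuotientMap π
  map_eq_zero_iff : ∀ p, π p = 0 ↔ ∃ a b : ℤ, p = (↑a, ↑b)

namespace IsTorusCovering

variable {T : Type*} [TopologicalSpace T] [AddGroup T] {π : ℝ × ℝ →+ T}

theorem map_eq_map_iff (hπ : IsTorusCovering π) {p q : ℝ × ℝ} :
    π q = π p ↔ ∃ a b : ℤ, q = p + ((a, b) : ℝ × ℝ) := by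
  rw [← sub_eq_zero, ← map_sub, hπ.map_eq_zero_iff]
  simp only [sub_eq_iff_eq_add']

theorem isAddQuotientCoveringMap (hπ : IsTorusCovering π) : IsAddQuotientCoveringMap π π.ker := by
  refine hπ.isQuotientMap.isAddQuotientCoveringMap_of_isDiscrete_ker_addMonoidHom ?_
  have hker : (π.ker : Set (ℝ × ℝ)) = range (Prod.map ((↑) : ℤ → ℝ) ((↑) : ℤ → ℝ)) := by
    ext p
    simp [hπ.map_eq_zero_iff, Prod.ext_iff, eq_comm]
  rw [hker]
  exact (Int.isClosedEmbedding_coe_real.isEmbedding.prodMap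
    Int.isClosedEmbedding_coe_real.isEmbedding).isDiscrete_range

theorem surjective (hπ : IsTorusCovering π) : Function.Surjective π :=
  hπ.isQuotientMap.surjective

theorem exists_continuousMap_apply_eq_coe (hπ : IsTorusCovering π) {φ : ℝ × ℝ →+ ℝ}
    (hφ : Continuous φ) (hφℤ : ∀ a b : ℤ, ∃ n : ℤ, (n : ℝ) = φ (a, b)) :
    ∃ c : C(T, AddCircle (1 : ℝ)), ∀ p, c (π p) = φ p := by
  let φ' : C(ℝ × ℝ, AddCircle (1 : ℝ)) := ⟨fun p ↦ φ p, AddCircle.continuous_mk' _ |>.comp hφ⟩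
  have hφ' : Function.FactorsThrough φ' π := fun q p hqp ↦ by
    obtain ⟨a, b, rfl⟩ := hπ.map_eq_map_iff.1 hqp
    obtain ⟨n, hn⟩ := hφℤ a b
    change (↑(φ (p + ((a, b) : ℝ × ℝ))) : AddCircle (1 : ℝ)) = φ p
    rw [map_add, ← hn, AddCircle.coe_add, add_eq_left]
    exact (AddCircle.coe_eq_zero_iff _).2 ⟨n, zsmul_one n⟩
  let π' : C(ℝ × ℝ, T) := ⟨π, hπ.isQuotientMap.continuous⟩
  exact ⟨hπ.isQuotientMap.lift (f := π') φ' hφ', DFunLike.congr_fun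
    (hπ.isQuotientMap.lift_comp (f := π') φ' hφ')⟩

theorem exists_joinedIn_preimage_of_joinedIn_graph (hπ : IsTorusCovering π) {S : Set T}
    {c : T → AddCircle (1 : ℝ)} {φ : ℝ × ℝ →+ ℝ} (hφ : Continuous φ) (hc : ∀ p, c (π p) = φ p)
    {x : T} {r r' : ℝ}
    (h : JoinedIn {z : T × ℝ | z.1 ∈ S ∧ (z.2 : AddCircle (1 : ℝ)) = c z.1} (x, r) (x, r')) :
    ∃ (p : ℝ × ℝ) (a b : ℤ), JoinedIn (π ⁻¹' S) p (p + ((a, b) : ℝ × ℝ)) ∧ r' = r + φ (a, b) := by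
  obtain ⟨γ, hγ⟩ := h
  obtain ⟨p, rfl⟩ := hπ.surjective x
  obtain ⟨Γ, hΓ, hΓ₀⟩ := hπ.isAddQuotientCoveringMap.isCoveringMap.exists_path_lifts
    (.comp .fst γ.toContinuousMap) p (by simp)
  have hΓ : ∀ t, π (Γ t) = (γ t).1 := congrFun hΓ
  obtain ⟨a, b, hab⟩ := hπ.map_eq_map_iff.1 ((hΓ 1).trans (congrArg Prod.fst γ.target))
  have hconst := (AddCircle.isCoveringMap_coe (1 : ℝ)).const_of_comp
    (g := fun t ↦ (γ t).2 - φ (Γ t)) (by fun_prop) (fun s t ↦ by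
      simp only [QuotientAddGroup.mk_sub]
      simp [(hγ _).2, ← hc, hΓ]) 1 0
  refine ⟨p, a, b, ⟨⟨Γ, hΓ₀, hab⟩, fun t ↦ ?_⟩, ?_⟩
  · simpa [hΓ] using (hγ t).1
  · simp only [γ.source, γ.target, hab, hΓ₀, map_add] at hconst
    linarith

theorem exists_continuousMap_coe_eq_on_isClosed [NormalSpace T] (hπ : IsTorusCovering π)
    {S K : Set T} [LocallyPathConnectedSpace S] (hK : IsClosed K) (hKS : K ⊆ S)
    {c : C(T, AddCircle (1 : ℝ))} {φ : ℝ × ℝ →+ ℝ} (hφ : Continuous φ) (hc : ∀ p, c (π p) = φ p)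
    (hS : ∀ (p : ℝ × ℝ) (a b : ℤ), JoinedIn (π ⁻¹' S) p (p + ((a, b) : ℝ × ℝ)) → φ (a, b) = 0) :
    ∃ H : C(T, ℝ), ∀ x ∈ K, (H x : AddCircle (1 : ℝ)) = c x :=
  exists_continuousMap_lift_on_isClosed hK hKS (AddCircle.isCoveringMap_coe 1)
    QuotientAddGroup.mk_surjective c.continuous.continuousOn fun x r r' hr ↦ by
      obtain ⟨p, a, b, hp, rfl⟩ := hπ.exists_joinedIn_preimage_of_joinedIn_graph hφ hc hr
      rw [hS p a b hp, add_zero]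

theorem eq_zero_of_joinedIn_preimage_ne (hπ : IsTorusCovering π) {c : T → AddCircle (1 : ℝ)}
    {φ : ℝ × ℝ →+ ℝ} (hφ : Continuous φ) (hc : ∀ p, c (π p) = φ p) {H : T → ℝ} (hH : Continuous H)
    {p : ℝ × ℝ} {a b : ℤ}
    (h : JoinedIn (π ⁻¹' {x | (H x : AddCircle (1 : ℝ)) ≠ c x}) p (p + ((a, b) : ℝ × ℝ))) :
    φ (a, b) = 0 := by
  have hπp : π (p + ((a, b) : ℝ × ℝ)) = π p := hπ.map_eq_map_iff.2 ⟨a, b, rfl⟩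
  obtain ⟨n, hn⟩ : ∃ n : ℤ, (n : ℝ) = φ (a, b) := by
    have hcoe := hc (p + ((a, b) : ℝ × ℝ))
    rw [hπp, hc, map_add, AddCircle.coe_add, left_eq_add] at hcoe
    simpa using (AddCircle.coe_eq_zero_iff _).1 hcoe
  obtain ⟨γ, hγ⟩ := h
  have hcont : Continuous fun t ↦ φ (γ t) - H (π (γ t)) := by
    have := hπ.isQuotientMap.continuous
    fun_prop
  have hfloor := floor_eq_floor_of_ordConnected (isPreconnected_range hcont).ordConnected
    (by
      rintro m ⟨t, ht⟩
      refine hγ t ?_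
      rw [hc, ← sub_eq_zero, ← AddCircle.coe_sub, AddCircle.coe_eq_zero_iff]
      exact ⟨-m, by simp [← ht]⟩)
    (mem_range_self 0) (mem_range_self 1)
  simp only [γ.source, γ.target, hπp, map_add, ← hn, add_sub_right_comm, Int.floor_add_intCast,
    left_eq_add] at hfloor
  rw [← hn, hfloor, Int.cast_zero]

theorem exists_coe_eq_of_continuous [CompactSpace T] (hπ : IsTorusCovering π) {H₁ H₂ : T → ℝ}
    (hH₁ : Continuous H₁) (hH₂ : Continuous H₂) {c₁ c₂ : T → AddCircle (1 : ℝ)}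
    (hc₁ : ∀ p, c₁ (π p) = p.1) (hc₂ : ∀ p, c₂ (π p) = p.2) : ∃ x, H₁ x = c₁ x ∧ H₂ x = c₂ x := by
  have hH := hH₁.prodMk hH₂
  obtain ⟨p, hp⟩ := exists_fixedPoint_of_isBounded_range (hH.comp hπ.isQuotientMap.continuous)
    ((isCompact_range hH).isBounded.subset (range_comp_subset_range _ _))
  refine ⟨π p, ?_, ?_⟩
  · rw [hc₁, ← congrArg Prod.fst hp]
    rfl
  · rw [hc₂, ← congrArg Prod.snd hp]
    rfl

theorem exists_joinedIn_preimage_add_zero_one (hπ : IsTorusCovering π) {O : Set T} {p : ℝ × ℝ}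
    {b : ℤ} (hb : b ≠ 0) (h : JoinedIn (π ⁻¹' O) p (p + ((0, b) : ℝ × ℝ))) :
    ∃ q, JoinedIn (π ⁻¹' O) q (q + (0, 1)) := by
  refine exists_joinedIn_add_vertical (Int.cast_ne_zero.2 hb) (fun q ↦ ?_) h 1
  rw [mem_preimage, hπ.map_eq_map_iff.2 ⟨0, b, by rw [Int.cast_zero]⟩, mem_preimage]

theorem exists_joinedIn_preimage_compl [CompactSpace T] [NormalSpace T] (hπ : IsTorusCovering π)
    {J : Set T} (hJ : IsClosed J) [LocallyPathConnectedSpace J]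
    (hwind : ∀ (p : ℝ × ℝ) (a b : ℤ), JoinedIn (π ⁻¹' J) p (p + ((a, b) : ℝ × ℝ)) → a = 0) :
    ∃ p, JoinedIn (π ⁻¹' Jᶜ) p (p + (0, 1)) := by
  by_contra! hblock
  obtain ⟨c₁, hc₁⟩ := hπ.exists_continuousMap_apply_eq_coe (φ := .fst ℝ ℝ) continuous_fst
    fun a _ ↦ ⟨a, rfl⟩
  obtain ⟨c₂, hc₂⟩ := hπ.exists_continuousMap_apply_eq_coe (φ := .snd ℝ ℝ) continuous_snd
    fun _ b ↦ ⟨b, rfl⟩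
  obtain ⟨H₁, hH₁⟩ := hπ.exists_continuousMap_coe_eq_on_isClosed hJ subset_rfl
    (φ := .fst ℝ ℝ) continuous_fst hc₁ fun p a b h ↦ by simp [hwind p a b h]
  let O : Set T := {x | (H₁ x : AddCircle (1 : ℝ)) ≠ c₁ x}
  let K : Set T := {x | ((H₁ x + 1 / 2 : ℝ) : AddCircle (1 : ℝ)) = c₁ x}
  have hOJ : O ⊆ Jᶜ := fun x hxO hxJ ↦ hxO (hH₁ x hxJ)
  have hKO : K ⊆ O := fun x hxK hxO ↦ coe_add_half_ne (H₁ x) (Eq.trans hxK hxO.symm)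
  have hOwind : ∀ (p : ℝ × ℝ) (a b : ℤ), JoinedIn (π ⁻¹' O) p (p + ((a, b) : ℝ × ℝ)) →
      b = 0 := by
    intro p a b h
    have ha : (a : ℝ) = 0 := hπ.eq_zero_of_joinedIn_preimage_ne continuous_fst hc₁ H₁.continuous h
    by_contra hb
    obtain ⟨q, hq⟩ := hπ.exists_joinedIn_preimage_add_zero_one hb (ha ▸ h)
    exact hblock q (hq.mono (preimage_mono hOJ))
  have := hπ.isQuotientMap.locallyPathConnectedSpace
  have := (isOpen_ne_fun (by fun_prop) (by fun_prop) : IsOpen O).locallyPathConnectedSpace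
  obtain ⟨H₂, hH₂⟩ := hπ.exists_continuousMap_coe_eq_on_isClosed
    (isClosed_eq (by fun_prop) (by fun_prop) : IsClosed K) hKO
    (φ := .snd ℝ ℝ) continuous_snd hc₂ fun p a b h ↦ by simp [hOwind p a b h]
  obtain ⟨x, hx₁, hx₂⟩ := hπ.exists_coe_eq_of_continuous (H₁ := fun x ↦ H₁ x + 1 / 2)
    (H₂ := fun x ↦ H₂ x + 1 / 2) (by fun_prop) (by fun_prop) hc₁ hc₂
  exact coe_add_half_ne (H₂ x) (hx₂.trans (hH₂ x hx₁).symm)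

theorem comp_continuousLinearMap (hπ : IsTorusCovering π) (A : ℝ × ℝ →L[ℝ] ℝ × ℝ)
    (hA : ∀ z, π z = 0 ↔ ∃ a b : ℤ, z = A (a, b)) :
    IsTorusCovering (π.comp (A : ℝ × ℝ →+ ℝ × ℝ)) := by
  have hbasis : ∀ a b : ℤ, ((a, b) : ℝ × ℝ) ∈ A.range := fun a b ↦ by
    obtain ⟨c, d, h⟩ := (hA (a, b)).1 ((hπ.map_eq_zero_iff _).2 ⟨a, b, rfl⟩)
    exact ⟨(c, d), h.symm⟩
  have hsurj : Function.Surjective A := fun p ↦ by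
    have h := A.range.add_mem (A.range.smul_mem p.1 (hbasis 1 0))
      (A.range.smul_mem p.2 (hbasis 0 1))
    simpa using h
  have hinj : Function.Injective A := LinearMap.injective_iff_surjective.2 hsurj
  refine ⟨hπ.isQuotientMap.comp (A.isQuotientMap hsurj), fun p ↦ (hA (A p)).trans ?_⟩
  simp only [hinj.eq_iff]

end IsTorusCovering

section Displacement

open FundamentalGroup

variable {E X : Type*} [TopologicalSpace E] [AddCommGroup E] [TopologicalSpace X] [AddGroup X]
  {π : E →+ X}

/-- For a covering homomorphism `π`, the homomorphism sending the class of a loop at `π e` to the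
difference of the endpoints of its lift starting at `e`. -/
noncomputable def displacement (hπ : IsAddQuotientCoveringMap π π.ker) (e : E) :
    FundamentalGroup X (π e) →* Multiplicative E :=
  π.ker.subtype.toMultiplicative.comp <|
    (MulOpposite.opMulEquiv (M := Multiplicative π.ker)).symm.toMonoidHom.comp <|
      hπ.fundamentalGroupToMulOpposite ⟨e, rfl⟩

theorem add_displacement (hπ : IsAddQuotientCoveringMap π π.ker) (e : E)
    (w : FundamentalGroup X (π e)) :
    (displacement hπ e w).toAdd + e = hπ.isCoveringMap.monodromy w ⟨e, rfl⟩ :=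
  hπ.unop_fundamentalGroupToMulOpposite_smul

theorem displacement_injective [SimplyConnectedSpace E] (hπ : IsAddQuotientCoveringMap π π.ker)
    (e : E) : Function.Injective (displacement hπ e) :=
  Subtype.val_injective.comp <| MulOpposite.unop_injective.comp <|
    hπ.fundamentalGroupToMulOpposite_injective ⟨e, rfl⟩

theorem exists_displacement_eq [PathConnectedSpace E] (hπ : IsAddQuotientCoveringMap π π.ker)
    (e : E) {z : E} (hz : π z = 0) : ∃ w, displacement hπ e w = .ofAdd z := by
  obtain ⟨w, hw⟩ := hπ.fundamentalGroupToMulOpposite_surjective ⟨e, rfl⟩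
    (MulOpposite.op (.ofAdd ⟨z, hz⟩))
  exact ⟨w, by simp [displacement, hw]⟩

theorem map_displacement (hπ : IsAddQuotientCoveringMap π π.ker) (e : E)
    (w : FundamentalGroup X (π e)) : π (displacement hπ e w).toAdd = 0 :=
  (hπ.fundamentalGroupToMulOpposite ⟨e, rfl⟩ w).unop.toAdd.2

theorem displacement_fromPath_eq (hπ : IsAddQuotientCoveringMap π π.ker) {e z : E}
    {γ : Path (π e) (π e)} (Γ : Path e (e + z)) (hΓ : ∀ t, π (Γ t) = γ t) :
    displacement hπ e (fromPath ⟦γ⟧) = .ofAdd z := by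
  have hend : π (e + z) = π e := by simpa using hΓ 1
  have hmono := hπ.isCoveringMap.monodromy_eq_of_map_eq (γ := ⟦γ⟧) (ex := ⟨e, rfl⟩)
    (ey := ⟨e + z, hend⟩) ⟦Γ⟧ (congrArg Path.Homotopic.Quotient.mk (Path.ext (funext hΓ)))
  have hadd : (displacement hπ e (fromPath ⟦γ⟧)).toAdd + e = e + z :=
    (add_displacement hπ e _).trans (congrArg Subtype.val hmono)
  exact Multiplicative.toAdd.injective (add_right_cancel (hadd.trans (add_comm e z)))

theorem exists_loop_displacement_eq [IsTopologicalAddGroup E] [PathConnectedSpace E]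
    (hπ : IsAddQuotientCoveringMap π π.ker) (e : E) {S : Set X} {p z : E} (hz : π z = 0)
    (h : JoinedIn (π ⁻¹' S) p (p + z)) :
    ∃ (y : X) (ℓ : Path y y) (P : Path (π e) y), range ℓ ⊆ S ∧
      displacement hπ e (fromPath ⟦(P.trans ℓ).trans P.symm⟧) = .ofAdd z := by
  obtain ⟨γ, hγ⟩ := h
  have hadd : ∀ q, π (q + z) = π q := fun q ↦ by rw [map_add, hz, add_zero]
  let Q : Path e p := PathConnectedSpace.somePath e p
  let Qz : Path (e + z) (p + z) := Q.map (continuous_add_const z)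
  refine ⟨π p, (γ.map hπ.continuous).cast rfl (hadd p).symm, Q.map hπ.continuous,
    range_subset_iff.2 hγ, displacement_fromPath_eq hπ ((Q.trans γ).trans Qz.symm) fun t ↦ ?_⟩
  simp only [Path.trans_apply]
  split_ifs <;> simp [Qz, hadd]

end Displacement

/-- The universal covering `ℝ² → (ℝ/ℤ)²`. -/
def torusMk : ℝ × ℝ →+ Torus2 :=
  (QuotientAddGroup.mk' _).prodMap (QuotientAddGroup.mk' _)

theorem isTorusCovering_torusMk : IsTorusCovering torusMk where
  isQuotientMap := (QuotientAddGroup.isOpenQuotientMap_mk.prodMap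
    QuotientAddGroup.isOpenQuotientMap_mk).isQuotientMap
  map_eq_zero_iff p := by
    change ((p.1 : AddCircle (1 : ℝ)), (p.2 : AddCircle (1 : ℝ))) = 0 ↔ _
    rw [Prod.mk_eq_zero, AddCircle.coe_eq_zero_iff, AddCircle.coe_eq_zero_iff]
    simp [Prod.ext_iff, eq_comm]

theorem IsTorusCovering.representsIn_of_joinedIn {π : ℝ × ℝ →+ Torus2} (hπ : IsTorusCovering π)
    {e p : ℝ × ℝ} {w : FundamentalGroup (TopCat.of Torus2) (π e)} {S : Set Torus2}
    (h : JoinedIn (π ⁻¹' S) p (p + (displacement hπ.isAddQuotientCoveringMap e w).toAdd)) :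
    RepresentsIn (π e) w S := by
  obtain ⟨y, ℓ, P, hℓ, hw⟩ := exists_loop_displacement_eq hπ.isAddQuotientCoveringMap e
    (map_displacement _ e w) h
  exact ⟨y, ℓ, P, hℓ, displacement_injective hπ.isAddQuotientCoveringMap e hw⟩

theorem IsTorusCovering.exists_continuousLinearMap {π : ℝ × ℝ →+ Torus2} (hπ : IsTorusCovering π)
    (e : ℝ × ℝ) {u v : FundamentalGroup (TopCat.of Torus2) (π e)}
    (hgen : ∀ g : FundamentalGroup (TopCat.of Torus2) (π e), ∃ a b : ℤ, g = u ^ a * v ^ b) :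
    ∃ A : ℝ × ℝ →L[ℝ] ℝ × ℝ, IsTorusCovering (π.comp (A : ℝ × ℝ →+ ℝ × ℝ)) ∧
      ∀ a b : ℤ, A (a, b) = (displacement hπ.isAddQuotientCoveringMap e (u ^ a * v ^ b)).toAdd := by
  let δ := displacement hπ.isAddQuotientCoveringMap e
  let A : ℝ × ℝ →L[ℝ] ℝ × ℝ := (ContinuousLinearMap.toSpanSingleton ℝ (δ u).toAdd).coprod
    (ContinuousLinearMap.toSpanSingleton ℝ (δ v).toAdd)
  have hA : ∀ a b : ℤ, A (a, b) = (δ (u ^ a * v ^ b)).toAdd := fun a b ↦ by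
    rw [map_mul, map_zpow, map_zpow]
    simp [A, Int.cast_smul_eq_zsmul]
  refine ⟨A, hπ.comp_continuousLinearMap A fun z ↦ ⟨fun hz ↦ ?_, ?_⟩, hA⟩
  · obtain ⟨w, hw⟩ := exists_displacement_eq hπ.isAddQuotientCoveringMap e hz
    obtain ⟨a, b, rfl⟩ := hgen w
    exact ⟨a, b, by rw [hA, hw]; rfl⟩
  · rintro ⟨a, b, rfl⟩
    rw [hA]
    exact map_displacement _ e _

theorem IsOneComplex.isClosed {J : Set Torus2} (hJ : IsOneComplex J) : IsClosed J := by
  obtain ⟨n, a, b, γ, -, rfl⟩ := hJ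
  exact isClosed_iUnion_of_finite fun i ↦ (isCompact_range (γ i).continuous).isClosed

theorem IsOneComplex.locallyPathConnectedSpace {J : Set Torus2} (hJ : IsOneComplex J) :
    LocallyPathConnectedSpace J := by
  obtain ⟨n, a, b, γ, -, rfl⟩ := hJ
  have : LocallyPathConnectedSpace unitInterval := (convex_Icc 0 1).locallyPathConnectedSpace
  rw [← range_sigma_eq_iUnion_range fun p : Σ _ : Fin n, unitInterval ↦ γ p.1 p.2]
  exact locallyPathConnectedSpace_range (continuous_sigma fun i ↦ (γ i).continuous)

theorem one_complex_carries_u_general (x : TopCat.of Torus2)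
    (u v : FundamentalGroup (TopCat.of Torus2) x)
    (hgen : ∀ g : FundamentalGroup (TopCat.of Torus2) x, ∃ a b : ℤ, g = u ^ a * v ^ b)
    (J : Set Torus2) (hJ : IsClosed J) [LocallyPathConnectedSpace J]
    (hv : ¬ RepresentsIn x v Jᶜ) :
    ∃ a b : ℤ, a ≠ 0 ∧ RepresentsIn x (u ^ a * v ^ b) J := by
  by_contra! hu
  have hπ := isTorusCovering_torusMk
  obtain ⟨e, rfl⟩ := hπ.surjective x
  obtain ⟨A, hA, hdisp⟩ := hπ.exists_continuousLinearMap e hgen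
  have hrep : ∀ {S : Set Torus2} {p : ℝ × ℝ} {a b : ℤ},
      JoinedIn ((torusMk.comp (A : ℝ × ℝ →+ ℝ × ℝ)) ⁻¹' S) p (p + ((a, b) : ℝ × ℝ)) →
        RepresentsIn (torusMk e) (u ^ a * v ^ b) S := fun {S p a b} ⟨γ, hγ⟩ ↦
    hπ.representsIn_of_joinedIn (p := A p) <| by
      rw [← hdisp, ← map_add]
      exact ⟨γ.map A.continuous, hγ⟩
  obtain ⟨p, hp⟩ := hA.exists_joinedIn_preimage_compl hJ fun p a b h ↦
    by_contra fun ha ↦ hu a b ha (hrep h)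
  exact hv (by simpa using hrep (a := 0) (b := 1) (by simpa using hp))

/-- **A 1-complex blocking `v` off the torus must carry `u` homologically.**
Let `J` be a 1-complex on the torus and `u, v` a basis of `H₁(T; ℤ)`.  If
`T − J` contains no closed curve representing `v`, then `J` contains a closed
curve representing `u^a * v^b` (i.e. `au + bv`) with `a ≠ 0`. -/
theorem one_complex_carries_u (x : TopCat.of Torus2)
    (u v : FundamentalGroup (TopCat.of Torus2) x)
    (hbasis : ∀ g : FundamentalGroup (TopCat.of Torus2) x,
      ∃! ab : ℤ × ℤ, g = u ^ ab.1 * v ^ ab.2)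
    (J : Set Torus2) (hJ : IsOneComplex J)
    (hv : ¬ RepresentsIn x v Jᶜ) :
    ∃ a b : ℤ, a ≠ 0 ∧ RepresentsIn x (u ^ a * v ^ b) J :=
  have := hJ.locallyPathConnectedSpace
  one_complex_carries_u_general x u v (fun g ↦ let ⟨(a, b), h, _⟩ := hbasis g; ⟨a, b, h⟩) J
    hJ.isClosed hv
end

section
/- Let T be the 2-torus with H₁(T; ℤ) having basis u, v, and let J be a 1-complex on T. If J contains a closed curve representing au + bv with a ≠ 0, then J contains an embedded (simple) closed curve representing a'u + b'v with a' ≠ 0. -/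
/-- A loop is simple (an embedded closed curve, i.e. injective as a map from
the circle) when two parameters with the same image are equal or are the two
endpoints. -/
def IsSimpleLoop {y : Torus2} (ℓ : Path y y) : Prop :=
  ∀ s t : unitInterval, ℓ s = ℓ t →
    s = t ∨ (s = 0 ∧ t = 1) ∨ (s = 1 ∧ t = 0)

/-- As `RepresentsIn`, but by an embedded (simple) closed curve. -/
def RepresentsInEmbedded (x : TopCat.of Torus2)
    (w : FundamentalGroup (TopCat.of Torus2) x) (S : Set Torus2) : Prop :=
  ∃ (y : Torus2) (ℓ : Path y y) (p : Path x y),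
    IsSimpleLoop ℓ ∧ Set.range ℓ ⊆ S ∧
    FundamentalGroup.fromPath ⟦(p.trans ℓ).trans p.symm⟧ = w

/-!
Choose a circle-valued map `f` on the torus that has winding number zero along `v` but not along
`u`; then `u ^ a * v ^ b` has winding number `0` exactly when `a = 0`. A loop in `J` with `a ≠ 0`
lifts to a path with distinct endpoints in the cyclic cover of the torus obtained by pulling back
`ℝ → ℝ / ℤ` along `f`. The preimage of `J` is locally arc-connected, so these endpoints are also
joined by an arc in it. The arc projects to a closed curve in `J` that is locally injective, hence
has a first time at which it returns to an earlier point. The part of the curve between these two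
visits is an embedded loop; it is covered by a piece of the arc, whose endpoints differ, so its
winding number is nonzero.
-/

open Set Filter Function unitInterval AddSubgroup
open scoped Topology

section Arcs

variable {E F : Type*} [TopologicalSpace E] [TopologicalSpace F] {K : Set E} {L : Set F}
  {x y z : E}

/-- `x` and `y` are the endpoints of an arc in `K`, i.e. of an injective path. The parameter
interval is an arbitrary compact interval of the line, which may be a point, so `x = y` is
allowed. -/
def ArcJoinedIn (K : Set E) (x y : E) : Prop :=
  ∃ a b : ℝ, a ≤ b ∧ ∃ g : ℝ → E,
    ContinuousOn g (Icc a b) ∧ InjOn g (Icc a b) ∧ MapsTo g (Icc a b) K ∧ g a = x ∧ g b = y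

namespace ArcJoinedIn

theorem refl (hx : x ∈ K) : ArcJoinedIn K x x :=
  ⟨0, 0, le_rfl, fun _ ↦ x, continuousOn_const, by simp, fun _ _ ↦ hx, rfl, rfl⟩

theorem map (h : ArcJoinedIn K x y) {f : E → F} (hf : ContinuousOn f K) (hinj : InjOn f K)
    (hmaps : MapsTo f K L) : ArcJoinedIn L (f x) (f y) := by
  obtain ⟨a, b, hab, g, hg, hgi, hgK, rfl, rfl⟩ := h
  exact ⟨a, b, hab, f ∘ g, hf.comp hg hgK, hinj.comp hgi hgK, hmaps.comp hgK, rfl, rfl⟩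

theorem mono (h : ArcJoinedIn K x y) {K' : Set E} (hKK' : K ⊆ K') : ArcJoinedIn K' x y :=
  h.map continuousOn_id (injOn_id K) hKK'

theorem symm (h : ArcJoinedIn K x y) : ArcJoinedIn K y x := by
  obtain ⟨a, b, hab, g, hg, hgi, hgK, rfl, rfl⟩ := h
  have hneg : MapsTo Neg.neg (Icc (-b) (-a)) (Icc a b) := fun t ht ↦
    ⟨le_neg.1 ht.2, neg_le.1 ht.1⟩
  exact ⟨-b, -a, neg_le_neg hab, g ∘ Neg.neg, hg.comp continuousOn_neg hneg,
    hgi.comp neg_injective.injOn hneg, hgK.comp hneg, by simp, by simp⟩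

theorem concat {a b c : ℝ} (hab : a ≤ b) (hbc : b ≤ c) {g k : ℝ → E}
    (hg : ContinuousOn g (Icc a b)) (hgi : InjOn g (Icc a b)) (hgK : MapsTo g (Icc a b) K)
    (hk : ContinuousOn k (Icc b c)) (hki : InjOn k (Icc b c)) (hkK : MapsTo k (Icc b c) K)
    (hb : g b = k b) (hmeet : ∀ s ∈ Icc a b, ∀ t ∈ Icc b c, g s = k t → s = b) :
    ArcJoinedIn K (g a) (k c) := by
  let h : ℝ → E := fun t ↦ if t ≤ b then g t else k t
  have hhg : EqOn h g (Icc a b) := fun t ht ↦ if_pos ht.2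
  have hhk : EqOn h k (Icc b c) := by
    intro t ht
    rcases ht.1.eq_or_lt with rfl | hlt
    · exact (if_pos le_rfl).trans hb
    · exact if_neg hlt.not_ge
  have hmeet' : ∀ s ∈ Icc a b, ∀ t ∈ Icc b c, h s = h t → s = t := by
    intro s hs t ht hst
    rw [hhg hs, hhk ht] at hst
    obtain rfl := hmeet s hs t ht hst
    exact hki ⟨le_rfl, hbc⟩ ht (hb.symm.trans hst)
  refine ⟨a, c, hab.trans hbc, h, ?_, ?_, ?_, hhg ⟨le_rfl, hab⟩, hhk ⟨hbc, le_rfl⟩⟩ <;>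
    rw [← Icc_union_Icc_eq_Icc hab hbc]
  · exact (hg.congr hhg).union_of_isClosed (hk.congr hhk) isClosed_Icc isClosed_Icc
  · rintro s (hs | hs) t (ht | ht) hst
    · exact (hgi.congr hhg.symm) hs ht hst
    · exact hmeet' s hs t ht hst
    · exact (hmeet' t ht s hs hst.symm).symm
    · exact (hki.congr hhk.symm) hs ht hst
  · exact (hgK.congr hhg.symm).union (hkK.congr hhk.symm)

-- Follow the first arc up to the first point where it meets the second one.
theorem trans [T2Space E] (hxy : ArcJoinedIn K x y) (hyz : ArcJoinedIn K y z) :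
    ArcJoinedIn K x z := by
  obtain ⟨a, b, hab, g, hg, hgi, hgK, rfl, rfl⟩ := hxy
  obtain ⟨c, d, hcd, k, hk, hki, hkK, hbc, rfl⟩ := hyz
  have hmeets : IsCompact (Icc a b ∩ g ⁻¹' (k '' Icc c d)) :=
    isCompact_Icc.of_isClosed_subset
      (hg.preimage_isClosed_of_isClosed isClosed_Icc
        (isCompact_Icc.image_of_continuousOn hk).isClosed)
      inter_subset_left
  obtain ⟨s, ⟨hs, t, ht, hts⟩, hfirst⟩ := hmeets.exists_isLeast
    ⟨b, ⟨hab, le_rfl⟩, c, ⟨le_rfl, hcd⟩, hbc⟩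
  have hshift : MapsTo (fun r ↦ r - s + t) (Icc s (s + (d - t))) (Icc c d) := fun r hr ↦
    ⟨by linarith [hr.1, ht.1], by linarith [hr.2]⟩
  have hsub : Icc a s ⊆ Icc a b := Icc_subset_Icc_right hs.2
  have h := concat (g := g) (k := fun r ↦ k (r - s + t)) (K := K) hs.1
    (le_add_of_nonneg_right (sub_nonneg.2 ht.2)) (hg.mono hsub) (hgi.mono hsub) (hgK.mono_left hsub)
    (hk.comp (by fun_prop) hshift)
    (hki.comp (fun r _ r' _ h ↦ by simpa using h) hshift) (hkK.comp hshift) (by simp [hts])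
    fun r hr r' hr' h ↦ hr.2.antisymm (hfirst ⟨hsub hr, _, hshift hr', h.symm⟩)
  simpa using h

theorem exists_path (h : ArcJoinedIn K x y) (hxy : x ≠ y) :
    ∃ γ : Path x y, Injective γ ∧ ∀ t, γ t ∈ K := by
  obtain ⟨a, b, hab, g, hg, hgi, hgK, rfl, rfl⟩ := h
  have hab' : a ≠ b := fun hab' ↦ hxy (congrArg g hab')
  have hmem : ∀ t : I, AffineMap.lineMap a b (t : ℝ) ∈ Icc a b := fun t ↦
    (convex_Icc a b).lineMap_mem (left_mem_Icc.2 hab) (right_mem_Icc.2 hab) t.2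
  refine ⟨⟨⟨fun t ↦ g (AffineMap.lineMap a b (t : ℝ)), hg.comp_continuous (by fun_prop) hmem⟩,
    by simp, by simp⟩, fun s t hst ↦ ?_, fun t ↦ hgK (hmem t)⟩
  exact Subtype.ext (AffineMap.lineMap_injective ℝ hab' (hgi (hmem s) (hmem t) hst))

theorem unitInterval_uIcc (s t : I) : ArcJoinedIn (uIcc s t) s t := by
  wlog hst : s ≤ t generalizing s t
  · exact uIcc_comm s t ▸ (this t s (le_of_not_ge hst)).symm
  have hsub : Icc (s : ℝ) t ⊆ Icc 0 1 := Icc_subset_Icc s.2.1 t.2.2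
  refine ⟨s, t, hst, projIcc 0 1 zero_le_one, continuous_projIcc.continuousOn,
    (strictMonoOn_projIcc _).injOn.mono hsub, fun r hr ↦ ?_, projIcc_val _ s, projIcc_val _ t⟩
  rw [uIcc_of_le hst, projIcc_of_mem _ (hsub hr)]
  exact hr

end ArcJoinedIn

/-- Every point `x` of `J` is joined to all nearby points of `J` by arcs of `J` inside any
prescribed neighborhood of `x`. Unlike the definition of a finite `1`-complex, this condition is
local, so that it passes to infinite covers. -/
def IsLocallyArcConnected (J : Set E) : Prop :=
  ∀ x ∈ J, ∀ U ∈ 𝓝 x, ∀ᶠ x' in 𝓝[J] x, ArcJoinedIn (J ∩ U) x x'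

namespace IsLocallyArcConnected

theorem range_of_injective [T2Space E] {γ : I → E} (hγ : Continuous γ) (hinj : Injective γ) :
    IsLocallyArcConnected (range γ) := by
  rintro _ ⟨s, rfl⟩ U hU
  have hsmall : ∀ᶠ t in 𝓝 s, uIcc s t ⊆ γ ⁻¹' U :=
    (tendsto_const_nhds.uIcc tendsto_id).eventually
      (eventually_smallSets_subset.2 (hγ.continuousAt hU))
  rw [← (hγ.isClosedEmbedding hinj).isEmbedding.map_nhds_eq, eventually_map]
  filter_upwards [hsmall] with t ht
  exact (ArcJoinedIn.unitInterval_uIcc s t).map hγ.continuousOn hinj.injOn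
    fun r hr ↦ ⟨mem_range_self r, ht hr⟩

theorem iUnion {ι : Type*} [Finite ι] {A : ι → Set E} (hclosed : ∀ i, IsClosed (A i))
    (hA : ∀ i, IsLocallyArcConnected (A i)) : IsLocallyArcConnected (⋃ i, A i) := by
  intro x _ U hU
  rw [nhdsWithin_iUnion, eventually_iSup]
  intro i
  by_cases hxi : x ∈ A i
  · exact (hA i x hxi U hU).mono fun _ h ↦ h.mono (inter_subset_inter_left U (subset_iUnion A i))
  · rw [← (hclosed i).closure_eq, notMem_closure_iff_nhdsWithin_eq_bot] at hxi
    simp [hxi]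

theorem preimage {J : Set F} (hJ : IsLocallyArcConnected J) {π : E → F}
    (hπ : IsLocalHomeomorph π) : IsLocallyArcConnected (π ⁻¹' J) := by
  intro e he U hU
  let φ := hπ.localInverseAt e
  have hφe : π e ∈ φ.source := hπ.apply_self_mem_localInverseAt_source
  have hV : φ.source ∩ φ ⁻¹' U ∈ 𝓝 (π e) :=
    inter_mem (φ.open_source.mem_nhds hφe)
      (φ.continuousAt hφe (by rwa [hπ.localInverseAt_apply_self]))
  have hnear : ∀ᶠ e' in 𝓝[π ⁻¹' J] e, ArcJoinedIn (J ∩ (φ.source ∩ φ ⁻¹' U)) (π e) (π e') :=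
    (hπ.continuous.continuousWithinAt.tendsto_nhdsWithin (mapsTo_preimage π J)).eventually
      (hJ (π e) he _ hV)
  have htarget : ∀ᶠ e' in 𝓝[π ⁻¹' J] e, e' ∈ φ.target :=
    nhdsWithin_le_nhds (φ.open_target.mem_nhds hπ.self_mem_localInverseAt_target)
  have hφπ : ∀ e' ∈ φ.target, φ (π e') = e' := fun e' he' ↦ by
    simpa [φ] using φ.right_inv he'
  filter_upwards [hnear, htarget] with e' harc he'
  have hlift := harc.map (L := π ⁻¹' J ∩ U) (φ.continuousOn.mono fun _ h ↦ h.2.1)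
    (φ.injOn.mono fun _ h ↦ h.2.1) fun z hz ↦
      ⟨by simpa [φ, hπ.apply_localInverseAt_of_mem hz.2.1] using hz.1, hz.2.2⟩
  rwa [hφπ e hπ.self_mem_localInverseAt_target, hφπ e' he'] at hlift

theorem arcJoinedIn [T2Space E] (hK : IsLocallyArcConnected K) (h : JoinedIn K x y) :
    ArcJoinedIn K x y := by
  obtain ⟨γ, hγ⟩ := h
  have hlocal : ∀ t, ∀ᶠ t' in 𝓝 t, ArcJoinedIn K (γ t) (γ t') := fun t ↦
    ((tendsto_nhdsWithin_iff.2 ⟨γ.continuous.continuousAt, .of_forall hγ⟩).eventually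
      (hK (γ t) (hγ t) univ univ_mem)).mono fun _ h ↦ h.mono inter_subset_left
  have hconst : IsLocallyConstant fun t ↦ ArcJoinedIn K x (γ t) :=
    (IsLocallyConstant.iff_eventually_eq _).2 fun t ↦ (hlocal t).mono fun t' htt' ↦
      propext ⟨fun h ↦ h.trans htt'.symm, fun h ↦ h.trans htt'⟩
  have hx : ArcJoinedIn K x (γ 0) := by
    simpa using ArcJoinedIn.refl (by simpa using hγ 0 : x ∈ K)
  simpa using (hconst.apply_eq_of_preconnectedSpace 0 1).mp hx

end IsLocallyArcConnected

end Arcs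

theorem exists_injOn_Ico_of_isLocallyInjective {α X : Type*} [LinearOrder α] [TopologicalSpace α]
    [OrderClosedTopology α] [CompactSpace α] [TopologicalSpace X] [T2Space X] {c : α → X}
    (hc : Continuous c) (hloc : IsLocallyInjective c) (hninj : ¬ Injective c) :
    ∃ s t, s < t ∧ c s = c t ∧ InjOn c (Ico s t) := by
  let returns : Set (c.Pullback c) := {p | p.fst ≤ p.snd} \ c.pullbackDiagonal
  have hfst : Continuous (Pullback.fst : c.Pullback c → α) :=
    continuous_fst.comp continuous_subtype_val
  have hsnd : Continuous (Pullback.snd : c.Pullback c → α) :=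
    continuous_snd.comp continuous_subtype_val
  have : CompactSpace (c.Pullback c) := isCompact_iff_compactSpace.1
    (isClosed_eq (hc.comp continuous_fst) (hc.comp continuous_snd)).isCompact
  -- Local injectivity makes the diagonal open, so that the times of return form a compact set.
  have hreturns : IsCompact (Pullback.snd '' returns) :=
    ((isClosed_le hfst hsnd).sdiff (isLocallyInjective_iff_isOpen_diagonal.1 hloc)).isCompact.image
      hsnd
  have hmem {r r' : α} (hlt : r < r') (heq : c r = c r') : r' ∈ Pullback.snd '' returns :=
    ⟨⟨(r, r'), heq⟩, ⟨hlt.le, hlt.ne⟩, rfl⟩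
  have hne : (Pullback.snd '' returns).Nonempty := by
    obtain ⟨r, r', heq, hrr'⟩ := not_injective_iff.1 hninj
    rcases hrr'.lt_or_gt with hlt | hlt
    exacts [⟨r', hmem hlt heq⟩, ⟨r, hmem hlt heq.symm⟩]
  obtain ⟨_, ⟨⟨⟨s, t⟩, hst⟩, ⟨hle, hoff⟩, rfl⟩, hfirst⟩ := hreturns.exists_isLeast hne
  refine ⟨s, t, lt_of_le_of_ne hle hoff, hst, fun r hr r' hr' heq ↦ ?_⟩
  by_contra hrr'
  rcases Ne.lt_or_gt hrr' with hlt | hlt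
  · exact (hfirst (hmem hlt heq)).not_gt hr'.2
  · exact (hfirst (hmem hlt heq.symm)).not_gt hr.2

theorem strictMono_convexComb {s t : I} (hst : s < t) : StrictMono (Set.Icc.convexComb s t) := by
  intro r r' hrr'
  have hst' : (s : ℝ) < t := hst
  have hrr'' : (r : ℝ) < r' := hrr'
  rw [← Subtype.coe_lt_coe, Icc.coe_convexComb, Icc.coe_convexComb]
  nlinarith

theorem injOn_Ico_subpath {E X : Type*} [TopologicalSpace E] {x y : E} {γ : Path x y} {π : E → X}
    {s t : I} (hst : s < t) (hinj : InjOn (π ∘ γ) (Ico s t)) :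
    InjOn (π ∘ γ.subpath s t) (Ico 0 1) := by
  have hmono := strictMono_convexComb hst
  refine hinj.comp (hmono.injective.injOn) fun r hr ↦ ⟨?_, ?_⟩
  · simpa using hmono.monotone hr.1
  · simpa using hmono hr.2

theorem IsLocallyArcConnected.exists_injOn_Ico_of_lift {E X : Type*} [TopologicalSpace E]
    [T2Space E] [TopologicalSpace X] [T2Space X] {π : E → X} (hπ : IsLocalHomeomorph π) {J : Set X}
    (hJ : IsLocallyArcConnected J) {e e' : E} (hjoin : JoinedIn (π ⁻¹' J) e e') (hne : e ≠ e')
    (heq : π e = π e') :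
    ∃ (y : X) (ℓ : Path y y) (d : C(I, E)), InjOn ℓ (Ico 0 1) ∧ range ℓ ⊆ J ∧
      (∀ t, π (d t) = ℓ t) ∧ d 0 ≠ d 1 := by
  obtain ⟨γ, hγinj, hγJ⟩ := ((hJ.preimage hπ).arcJoinedIn hjoin).exists_path hne
  have hloc : IsLocallyInjective (π ∘ γ) := hπ.isLocallyInjective.comp_right γ.continuous hγinj
  have hninj : ¬ Injective (π ∘ γ) := fun h ↦
    zero_ne_one (h (a₁ := 0) (a₂ := 1) (by simpa using heq))
  obtain ⟨s, t, hst, hends, hinj⟩ :=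
    exists_injOn_Ico_of_isLocallyInjective (hπ.continuous.comp γ.continuous) hloc hninj
  have hends' : π (γ s) = π (γ t) := hends
  let d := γ.subpath s t
  refine ⟨π (γ s), (d.map hπ.continuous).cast rfl hends', d, ?_, ?_, fun _ ↦ rfl, ?_⟩
  · exact injOn_Ico_subpath hst hinj
  · rintro _ ⟨r, rfl⟩
    exact hγJ _
  · simpa using hγinj.ne hst.ne

section LiftIncrement

variable {𝕜 : Type*} [AddCommGroup 𝕜] [TopologicalSpace 𝕜] [IsTopologicalAddGroup 𝕜] {p : 𝕜}
  [DiscreteTopology (zmultiples p)]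

theorem exists_lift_addCircle_apply_zero_eq (γ : C(I, AddCircle p)) {e : 𝕜} (he : γ 0 = e) :
    ∃ r : C(I, 𝕜), (∀ t, (r t : AddCircle p) = γ t) ∧ r 0 = e := by
  obtain ⟨r, hr, hr0⟩ := (AddCircle.isCoveringMap_coe p).exists_path_lifts γ e he
  exact ⟨r, congrFun hr, hr0⟩

theorem increment_eq_of_homotopicRel_lifts {γ γ' : C(I, AddCircle p)}
    (h : γ.HomotopicRel γ' {0, 1}) {r r' : C(I, 𝕜)} (hr : ∀ t, (r t : AddCircle p) = γ t)
    (hr' : ∀ t, (r' t : AddCircle p) = γ' t) : r 1 - r 0 = r' 1 - r' 0 := by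
  let s : C(I, 𝕜) := r' + ContinuousMap.const I (r 0 - r' 0)
  have hs : ∀ t, (s t : AddCircle p) = γ' t := fun t ↦ by
    have h0 : γ 0 = γ' 0 := h.some.fst_eq_snd (.inl rfl)
    simp [s, hr, hr', h0]
  have hcov := AddCircle.isCoveringMap_coe p
  have hrs : r.HomotopicRel s {0, 1} := by
    refine (hcov.homotopicRel_iff_comp ⟨0, .inl rfl, by simp [s]⟩).2 ?_
    convert h
    exacts [ContinuousMap.ext hr, ContinuousMap.ext hs]
  have h1 : r 1 = s 1 := hrs.some.fst_eq_snd (.inr rfl)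
  rw [h1]
  simp [s]
  abel

theorem exists_lift_addCircle (γ : C(I, AddCircle p)) :
    ∃ r : C(I, 𝕜), ∀ t, (r t : AddCircle p) = γ t :=
  let ⟨_, he⟩ := QuotientAddGroup.mk_surjective (γ 0)
  let ⟨r, hr, _⟩ := exists_lift_addCircle_apply_zero_eq γ he.symm
  ⟨r, hr⟩

/-- The total increment `r 1 - r 0` of a lift `r : I → 𝕜` of a path in `𝕜 ⧸ ℤ p`; by
`liftIncrement_eq` it does not depend on the lift. -/
noncomputable def liftIncrement (γ : C(I, AddCircle p)) : 𝕜 :=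
  (exists_lift_addCircle γ).choose 1 - (exists_lift_addCircle γ).choose 0

theorem liftIncrement_eq {γ : C(I, AddCircle p)} {r : C(I, 𝕜)}
    (hr : ∀ t, (r t : AddCircle p) = γ t) : liftIncrement γ = r 1 - r 0 :=
  increment_eq_of_homotopicRel_lifts (.refl γ) (exists_lift_addCircle γ).choose_spec hr

end LiftIncrement

section Winding

variable {𝕜 : Type*} [AddCommGroup 𝕜] [TopologicalSpace 𝕜] [IsTopologicalAddGroup 𝕜] {p : 𝕜}
  [DiscreteTopology (zmultiples p)] {X : Type*} [TopologicalSpace X] {x y z : X}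
  {f g : C(X, AddCircle p)}

/-- The increment along `γ` of a continuous choice of preimages in `𝕜` of the values of `f`. For a
loop this is `p` times the winding number of `f ∘ γ`. -/
noncomputable def windingAlong (f : C(X, AddCircle p)) (γ : Path x y) : 𝕜 :=
  liftIncrement (f.comp γ.toContinuousMap)

theorem windingAlong_eq {γ : Path x y} {r : C(I, 𝕜)} (hr : ∀ t, (r t : AddCircle p) = f (γ t)) :
    windingAlong f γ = r 1 - r 0 :=
  liftIncrement_eq hr

theorem exists_lift_comp_path (f : C(X, AddCircle p)) (γ : Path x y) :
    ∃ r : C(I, 𝕜), ∀ t, (r t : AddCircle p) = f (γ t) :=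
  exists_lift_addCircle (f.comp γ.toContinuousMap)

theorem windingAlong_eq_of_homotopic {γ γ' : Path x y} (h : γ.Homotopic γ') :
    windingAlong f γ = windingAlong f γ' := by
  obtain ⟨r, hr⟩ := exists_lift_comp_path f γ
  obtain ⟨r', hr'⟩ := exists_lift_comp_path f γ'
  rw [windingAlong_eq hr, windingAlong_eq hr']
  exact increment_eq_of_homotopicRel_lifts (ContinuousMap.HomotopicRel.comp_continuousMap h f)
    hr hr'

theorem windingAlong_add (γ : Path x y) :
    windingAlong (f + g) γ = windingAlong f γ + windingAlong g γ := by
  obtain ⟨r, hr⟩ := exists_lift_comp_path f γ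
  obtain ⟨s, hs⟩ := exists_lift_comp_path g γ
  rw [windingAlong_eq hr, windingAlong_eq hs,
    windingAlong_eq (r := r + s) fun t ↦ by simp [hr, hs]]
  simp only [ContinuousMap.add_apply]
  abel

theorem windingAlong_trans (γ : Path x y) (γ' : Path y z) :
    windingAlong f (γ.trans γ') = windingAlong f γ + windingAlong f γ' := by
  obtain ⟨r, hr⟩ := exists_lift_comp_path f γ
  obtain ⟨s, hs, hs0⟩ := exists_lift_addCircle_apply_zero_eq (f.comp γ'.toContinuousMap)
    (e := r 1) (by simp [hr])
  let q : Path (r 0) (s 1) := (⟨r, rfl, rfl⟩ : Path (r 0) (r 1)).trans ⟨s, hs0, rfl⟩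
  have hq : ∀ t, (q t : AddCircle p) = f (γ.trans γ' t) := fun t ↦ by
    simp only [q, Path.trans_apply]
    split_ifs
    exacts [hr _, hs _]
  rw [windingAlong_eq (r := q) hq, windingAlong_eq hr, windingAlong_eq hs, hs0]
  simp

theorem windingAlong_symm (γ : Path x y) : windingAlong f γ.symm = -windingAlong f γ := by
  obtain ⟨r, hr⟩ := exists_lift_comp_path f γ
  rw [windingAlong_eq hr, windingAlong_eq (r := r.comp ⟨σ, continuous_symm⟩) fun t ↦ hr (σ t)]
  simp

theorem windingAlong_conj (q : Path x y) (ℓ : Path y y) :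
    windingAlong f ((q.trans ℓ).trans q.symm) = windingAlong f ℓ := by
  rw [windingAlong_trans, windingAlong_trans, windingAlong_symm, add_neg_cancel_comm]

theorem windingAlong_mem_zmultiples (ℓ : Path x x) : windingAlong f ℓ ∈ zmultiples p := by
  obtain ⟨r, hr⟩ := exists_lift_comp_path f ℓ
  rw [windingAlong_eq hr, ← QuotientAddGroup.eq_zero_iff]
  simp [hr]

/-- The pairing of `C(X, 𝕜 ⧸ ℤ p)` with the fundamental group given by `windingAlong`. -/
noncomputable def windingPairing (x : X) :
    C(X, AddCircle p) →+ Additive (FundamentalGroup X x) →+ 𝕜 :=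
  AddMonoidHom.mk' (fun f ↦ AddMonoidHom.mk'
      (fun w ↦ Quotient.lift (windingAlong f) (fun _ _ ↦ windingAlong_eq_of_homotopic)
        w.toMul.toPath)
      (by
        rintro ⟨γ⟩ ⟨γ'⟩
        exact (windingAlong_trans γ' γ).trans (add_comm _ _)))
    fun f g ↦ AddMonoidHom.ext <| by
      rintro ⟨γ⟩
      exact windingAlong_add γ

@[simp]
theorem windingPairing_fromPath (ℓ : Path x x) :
    windingPairing x f (.ofMul (FundamentalGroup.fromPath ⟦ℓ⟧)) = windingAlong f ℓ :=
  rfl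

theorem windingAlong_eq_zsmul_of_conj {u v : FundamentalGroup X x}
    (hv : windingPairing x f (.ofMul v) = 0) {q : Path x y} {ℓ : Path y y} {a b : ℤ}
    (h : FundamentalGroup.fromPath ⟦(q.trans ℓ).trans q.symm⟧ = u ^ a * v ^ b) :
    windingAlong f ℓ = a • windingPairing x f (.ofMul u) := by
  rw [← windingAlong_conj q ℓ, ← windingPairing_fromPath, h, ofMul_mul, map_add, ofMul_zpow,
    ofMul_zpow, map_zsmul, map_zsmul, hv, smul_zero, add_zero]

theorem exists_windingPairing_eq_intCast (f : C(X, AddCircle (1 : ℝ)))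
    (w : Additive (FundamentalGroup X x)) : ∃ k : ℤ, windingPairing x f w = k := by
  obtain ⟨ℓ⟩ := w
  obtain ⟨k, hk⟩ := windingAlong_mem_zmultiples (f := f) ℓ
  exact ⟨k, hk.symm.trans (zsmul_one k)⟩

end Winding

section Pullback

variable {A B Y : Type*} [TopologicalSpace A] [TopologicalSpace B] [TopologicalSpace Y] {q : B → Y}
  {f : A → Y}

theorem isOpenMap_pullback_snd (hq : IsOpenMap q) (hf : Continuous f) :
    IsOpenMap (Pullback.snd : q.Pullback f → A) := by
  refine isOpenMap_iff_nhds_le.2 fun e s hs ↦ ?_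
  obtain ⟨W, hW, hWs⟩ := mem_nhds_subtype _ e _ |>.1 hs
  obtain ⟨U, hU, V, hV, hUV⟩ := mem_nhds_prod_iff.1 hW
  have hqU : f ⁻¹' (q '' U) ∈ 𝓝 e.snd :=
    hf.continuousAt.preimage_mem_nhds (e.2 ▸ hq.image_mem_nhds hU)
  filter_upwards [hV, hqU] with a haV ⟨b, hbU, hb⟩
  exact @hWs ⟨(b, a), hb⟩ (hUV ⟨hbU, haV⟩)

theorem isLocalHomeomorph_pullback_snd (hq : IsLocalHomeomorph q) (hf : Continuous f) :
    IsLocalHomeomorph (Pullback.snd : q.Pullback f → A) := by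
  refine isLocalHomeomorph_iff_isOpenEmbedding_restrict.2 fun e ↦ ?_
  obtain ⟨U, hU, heU, hinj⟩ := hq.isLocallyInjective e.fst
  have hU' : IsOpen (Pullback.fst ⁻¹' U : Set (q.Pullback f)) :=
    hU.preimage (continuous_fst.comp continuous_subtype_val)
  refine ⟨_, hU'.mem_nhds heU, .of_continuous_injective_isOpenMap ?_ ?_
    ((isOpenMap_pullback_snd hq.isOpenMap hf).domRestrict hU')⟩
  · exact (continuous_snd.comp continuous_subtype_val).comp continuous_subtype_val
  · rintro ⟨⟨⟨b, a⟩, hb⟩, hbU⟩ ⟨⟨⟨b', _⟩, hb'⟩, hbU'⟩ (rfl : a = _)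
    obtain rfl := hinj hbU hbU' (hb.trans hb'.symm)
    rfl

end Pullback

section EmbeddedLoop

variable {𝕜 : Type*} [AddCommGroup 𝕜] [TopologicalSpace 𝕜] [IsTopologicalAddGroup 𝕜] [T2Space 𝕜]
  {p : 𝕜} [DiscreteTopology (zmultiples p)] {X : Type*} [TopologicalSpace X] [T2Space X]

theorem IsLocallyArcConnected.exists_injOn_Ico_windingAlong_ne_zero {J : Set X}
    (hJ : IsLocallyArcConnected J) {f : C(X, AddCircle p)} {x : X} {ℓ : Path x x} (hℓ : range ℓ ⊆ J)
    (hf : windingAlong f ℓ ≠ 0) :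
    ∃ (y : X) (ℓ' : Path y y), InjOn ℓ' (Ico 0 1) ∧ range ℓ' ⊆ J ∧ windingAlong f ℓ' ≠ 0 := by
  -- The cyclic cover of `X` classified by `f`.
  let E := ((↑) : 𝕜 → AddCircle p).Pullback f
  obtain ⟨r, hr⟩ := exists_lift_comp_path f ℓ
  have hπ : IsLocalHomeomorph (Pullback.snd : E → X) :=
    isLocalHomeomorph_pullback_snd (AddCircle.isLocalHomeomorph_coe p) f.continuous
  let lift : C(I, E) := ⟨fun t ↦ ⟨(r t, ℓ t), hr t⟩, by fun_prop⟩
  have hjoin : JoinedIn (Pullback.snd ⁻¹' J) (lift 0) (lift 1) :=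
    ⟨⟨lift, rfl, rfl⟩, fun t ↦ hℓ (mem_range_self t)⟩
  have hne : lift 0 ≠ lift 1 := fun h ↦ hf <| by
    rw [windingAlong_eq hr, sub_eq_zero]
    exact congrArg Pullback.fst h.symm
  obtain ⟨y, ℓ', d, hinj, hℓ', hd, hd01⟩ :=
    hJ.exists_injOn_Ico_of_lift hπ hjoin hne (ℓ.source.trans ℓ.target.symm)
  refine ⟨y, ℓ', hinj, hℓ', ?_⟩
  let r' : C(I, 𝕜) :=
    ⟨fun t ↦ (d t).fst, continuous_fst.comp (continuous_subtype_val.comp d.continuous)⟩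
  rw [windingAlong_eq (r := r') fun t ↦ (d t).2.trans (congrArg f (hd t)), sub_ne_zero]
  refine fun h ↦ hd01 (Subtype.ext (Prod.ext h.symm ?_))
  exact (hd 0).trans ((ℓ'.source.trans ℓ'.target.symm).trans (hd 1).symm)

end EmbeddedLoop

theorem det_ne_zero_of_forall_exists_zsmul_add_zsmul {H R : Type*} [AddGroup H] [CommRing R]
    [Nontrivial R] {u v : H} (hgen : ∀ w, ∃ a b : ℤ, w = a • u + b • v) (φ ψ : H →+ R) {w₁ w₂ : H}
    (hφ₁ : φ w₁ = 1) (hψ₁ : ψ w₁ = 0) (hφ₂ : φ w₂ = 0) (hψ₂ : ψ w₂ = 1) :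
    φ u * ψ v - φ v * ψ u ≠ 0 := by
  obtain ⟨a, b, rfl⟩ := hgen w₁
  obtain ⟨c, d, rfl⟩ := hgen w₂
  simp only [map_add, map_zsmul, zsmul_eq_mul] at hφ₁ hψ₁ hφ₂ hψ₂
  intro hdet
  have hone : (1 : R) = (a * d - b * c) * (φ u * ψ v - φ v * ψ u) := by
    linear_combination -hφ₁ * (c * ψ u + d * ψ v) - hψ₂ + hφ₂ * (a * ψ u + b * ψ v)
  exact one_ne_zero (hone.trans (by rw [hdet, mul_zero]))

theorem exists_path_windingAlong_id_eq_zsmul {p : ℝ} (x : AddCircle p) (k : ℤ) :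
    ∃ γ : Path x x, windingAlong (.id (AddCircle p)) γ = k • p := by
  have hkp : ((k • p : ℝ) : AddCircle p) = 0 := AddCircle.coe_eq_zero_iff p |>.2 ⟨k, rfl⟩
  obtain ⟨e, rfl⟩ := QuotientAddGroup.mk_surjective x
  let γ : Path (e : AddCircle p) e :=
    ⟨⟨fun t ↦ e + ((t * k • p : ℝ) : AddCircle p), by fun_prop⟩, by simp,
      by simp [-zsmul_eq_mul, hkp]⟩
  refine ⟨γ, ?_⟩
  rw [windingAlong_eq (r := ⟨fun t ↦ e + t * k • p, by fun_prop⟩) fun t ↦ by simp [γ]]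
  simp

namespace Torus2

theorem exists_windingPairing_eq (x : Torus2) (k l : ℤ) :
    ∃ w : Additive (FundamentalGroup Torus2 x),
      windingPairing x .fst w = (k : ℝ) ∧ windingPairing x .snd w = (l : ℝ) := by
  obtain ⟨γ, hγ⟩ := exists_path_windingAlong_id_eq_zsmul x.1 k
  obtain ⟨γ', hγ'⟩ := exists_path_windingAlong_id_eq_zsmul x.2 l
  rw [zsmul_one] at hγ hγ'
  exact ⟨.ofMul (FundamentalGroup.fromPath ⟦γ.prod γ'⟧), hγ, hγ'⟩

theorem exists_windingPairing_eq_zero_and_ne_zero {x : Torus2} {u v : FundamentalGroup Torus2 x}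
    (hgen : ∀ g : FundamentalGroup Torus2 x, ∃ a b : ℤ, g = u ^ a * v ^ b) :
    ∃ f : C(Torus2, AddCircle (1 : ℝ)),
      windingPairing x f (.ofMul v) = 0 ∧ windingPairing x f (.ofMul u) ≠ 0 := by
  obtain ⟨w₁, hfst₁, hsnd₁⟩ := exists_windingPairing_eq x 1 0
  obtain ⟨w₂, hfst₂, hsnd₂⟩ := exists_windingPairing_eq x 0 1
  have hdet := det_ne_zero_of_forall_exists_zsmul_add_zsmul (u := .ofMul u) (v := .ofMul v)
    (fun g ↦ hgen g.toMul) (windingPairing x .fst) (windingPairing x .snd)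
    (by simpa using hfst₁) (by simpa using hsnd₁) (by simpa using hfst₂) (by simpa using hsnd₂)
  obtain ⟨m, hm⟩ := exists_windingPairing_eq_intCast .fst (.ofMul v)
  obtain ⟨n, hn⟩ := exists_windingPairing_eq_intCast .snd (.ofMul v)
  refine ⟨n • .fst - m • .snd, ?_, ?_⟩
  · simp [hm, hn, mul_comm]
  · simpa [hm, hn, mul_comm] using hdet

end Torus2

theorem IsSimpleLoop.of_injOn {y : Torus2} {ℓ : Path y y} (hinj : InjOn ℓ (Ico 0 1)) :
    IsSimpleLoop ℓ := by
  have hlt {s : I} (hs : s ≠ 1) : s ∈ Ico (0 : I) 1 := ⟨s.2.1, unitInterval.lt_one_iff_ne_one.2 hs⟩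
  have hend {s : I} (hs : s ≠ 1) (h : ℓ s = ℓ 1) : s = 0 :=
    hinj (hlt hs) (hlt zero_ne_one) (by rw [h, ℓ.source, ℓ.target])
  intro s t hst
  by_cases hs : s = 1 <;> by_cases ht : t = 1
  · exact .inl (hs.trans ht.symm)
  · exact .inr (.inr ⟨hs, hend ht (hs ▸ hst.symm)⟩)
  · exact .inr (.inl ⟨hend hs (ht ▸ hst), ht⟩)
  · exact .inl (hinj (hlt hs) (hlt ht) hst)

theorem IsOneComplex.isLocallyArcConnected {J : Set Torus2} (hJ : IsOneComplex J) :
    IsLocallyArcConnected J := by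
  obtain ⟨n, _, _, γ, hγ, rfl⟩ := hJ
  exact .iUnion (fun i ↦ (isCompact_range (γ i).continuous).isClosed)
    fun i ↦ .range_of_injective (γ i).continuous (hγ i)

theorem embedded_representative_of_representative_general (x : TopCat.of Torus2)
    (u v : FundamentalGroup (TopCat.of Torus2) x)
    (hgen : ∀ g : FundamentalGroup (TopCat.of Torus2) x, ∃ a b : ℤ, g = u ^ a * v ^ b)
    (J : Set Torus2) (hJ : IsLocallyArcConnected J)
    (a b : ℤ) (ha : a ≠ 0) (hrep : RepresentsIn x (u ^ a * v ^ b) J) :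
    ∃ a' b' : ℤ, a' ≠ 0 ∧ RepresentsInEmbedded x (u ^ a' * v ^ b') J := by
  obtain ⟨f, hfv, hfu⟩ := Torus2.exists_windingPairing_eq_zero_and_ne_zero (x := x) hgen
  obtain ⟨y, ℓ, q, hℓ, hq⟩ := hrep
  have hwind : windingAlong f ℓ ≠ 0 := by
    rw [windingAlong_eq_zsmul_of_conj hfv hq]
    exact smul_ne_zero ha hfu
  obtain ⟨y', ℓ', hinj, hℓ', hwind'⟩ := hJ.exists_injOn_Ico_windingAlong_ne_zero hℓ hwind
  let q' : Path x y' := PathConnectedSpace.somePath x y'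
  obtain ⟨a', b', hq'⟩ := hgen (FundamentalGroup.fromPath ⟦(q'.trans ℓ').trans q'.symm⟧)
  refine ⟨a', b', ?_, y', ℓ', q', .of_injOn hinj, hℓ', hq'⟩
  rintro rfl
  exact hwind' (by rw [windingAlong_eq_zsmul_of_conj hfv hq', zero_smul])

/-- **From a representative to an embedded representative.**  Let `J` be a
1-complex on the torus and `u, v` a basis of `H₁(T; ℤ)`.  If `J` contains a
closed curve representing `u^a * v^b` (i.e. `au + bv`) with `a ≠ 0`, then `J`
contains an embedded closed curve representing `u^{a'} * v^{b'}` with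
`a' ≠ 0`. -/
theorem embedded_representative_of_representative (x : TopCat.of Torus2)
    (u v : FundamentalGroup (TopCat.of Torus2) x)
    (hbasis : ∀ g : FundamentalGroup (TopCat.of Torus2) x,
      ∃! ab : ℤ × ℤ, g = u ^ ab.1 * v ^ ab.2)
    (J : Set Torus2) (hJ : IsOneComplex J)
    (a b : ℤ) (ha : a ≠ 0) (hrep : RepresentsIn x (u ^ a * v ^ b) J) :
    ∃ a' b' : ℤ, a' ≠ 0 ∧ RepresentsInEmbedded x (u ^ a' * v ^ b') J := by
  exact embedded_representative_of_representative_general x u v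
    (fun g ↦ let ⟨(c, d), hcd, _⟩ := hbasis g; ⟨c, d, hcd⟩) J hJ.isLocallyArcConnected a b ha hrep
end
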